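/- For every λ ∈ [1/2, 2], every ν ≥ λ with ν + λ + 1 − 2√(2λ) > 0 (this positivity fails only when ν = λ = 1/2), and every x > 0, K_{ν+1}(x)/K_ν(x) > (ν + λ + √((ν − λ)² + c·x²))/x, where c = (ν − λ)/(ν + λ − 2√(2λ) + 1). -/

import Mathlib

/-- The modified Bessel function of the second kind,
`K_ν(x) = ∫_0^∞ e^{-x cosh t} cosh(ν t) dt`. -/
noncomputable def besselK (ν x : ℝ) : ℝ :=
  ∫ t in Set.Ioi (0 : ℝ), Real.exp (-x * Real.cosh t) * Real.cosh (ν * t)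

/-!
The scaled ratio `y(x) = x K_{ν+1}(x) / K_ν(x)` solves the Riccati equation
`x y' = y² - 2νy - x²`. With `μ = ν - λ` and `k = √(2λ) - 1` one has `c = μ / (μ + k²)`, and
`b(x) = ν + λ + s(x)`, where `s(x) = √(μ² + c x²)`, satisfies the same equation up to the
nonnegative defect `(s - μ) (k s - μ)² / (μ s)`. Hence `f = b - y` solves a linear equation
`f' = P f + g` with `P ≥ 1` and `g ≥ 0`, so once `f` is positive it grows without bound; but
`f` is bounded above, because `y ≥ x` and `b ≤ x + O(1)`. So `f ≤ 0`, and `f` cannot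
vanish either, since it would then vanish from that point on, and `g` with it.
-/

open Real Set Filter Topology MeasureTheory

section Comparison

variable {f f' : ℝ → ℝ} {a : ℝ}

theorem nonpos_of_le_deriv_of_bddAbove (hf : ∀ u ∈ Ici a, HasDerivAt f (f' u) u)
    (hf' : ∀ u ∈ Ici a, 0 < f u → f u ≤ f' u) (hbdd : BddAbove (f '' Ici a)) : f a ≤ 0 := by
  by_contra! hfa
  obtain ⟨M, hM⟩ := hbdd
  have hMa : f a ≤ M := hM (mem_image_of_mem f self_mem_Ici)
  let barrier : ℝ → ℝ := fun u => f a + f a / 2 * (u - a)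
  have barrier_deriv : ∀ u, HasDerivAt barrier (f a / 2) u := fun u => by
    simpa [barrier] using
      (((hasDerivAt_id u).sub_const a).const_mul (f a / 2)).const_add (f a)
  -- Where `f` meets the barrier, `f' ≥ f ≥ f a > f a / 2`, so `f` can only cross it upwards.
  have barrier_le : ∀ b, ∀ u ∈ Icc a b, barrier u ≤ f u := fun b =>
    image_le_of_deriv_right_lt_deriv_boundary'
      (fun u _ => (barrier_deriv u).continuousAt.continuousWithinAt)
      (fun u _ => (barrier_deriv u).hasDerivWithinAt) (by simp [barrier])
      (fun u hu => (hf u hu.1).continuousAt.continuousWithinAt)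
      (fun u hu => (hf u hu.1).hasDerivWithinAt) (fun u hu heq => by
        have hle : f a ≤ barrier u :=
          le_add_of_nonneg_right (mul_nonneg (by positivity) (sub_nonneg.2 hu.1))
        have := hf' u hu.1 (by linarith)
        linarith)
  set b := a + 2 * (M / f a) with hb
  have hab : a ≤ b := le_add_of_nonneg_right (by have := hfa.trans_le hMa; positivity)
  have hlow : barrier b ≤ f b := barrier_le b b (right_mem_Icc.2 hab)
  have hupp : f b ≤ M := hM (mem_image_of_mem f hab)
  have : barrier b = f a + M := by simp only [barrier, hb]; field_simp; ring
  linarith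

theorem nonneg_of_const_mul_le_deriv {b C : ℝ} (hf : ∀ u ∈ Icc a b, HasDerivAt f (f' u) u)
    (hf' : ∀ u ∈ Icc a b, C * f u ≤ f' u) (ha : 0 ≤ f a) : ∀ u ∈ Icc a b, 0 ≤ f u := by
  intro u hu
  have gronwall := le_gronwallBound_of_liminf_deriv_right_le (f := fun u => -f u)
    (f' := fun u => -f' u) (δ := 0) (K := C) (ε := 0)
    (fun v hv => (hf v hv).continuousAt.neg.continuousWithinAt)
    (fun v hv _ hr =>
      (hf v (Ico_subset_Icc_self hv)).neg.hasDerivWithinAt.liminf_right_slope_le hr)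
    (neg_nonpos.2 ha)
    (fun v hv => by linarith [hf' v (Ico_subset_Icc_self hv)]) u hu
  rw [gronwallBound_ε0_δ0] at gronwall
  exact neg_nonpos.1 gronwall

theorem neg_of_hasDerivAt_linear_of_bddAbove {P g : ℝ → ℝ}
    (hf : ∀ u ∈ Ici a, HasDerivAt f (P u * f u + g u) u) (hP : ContinuousOn P (Ici a))
    (one_le_P : ∀ u ∈ Ici a, 1 ≤ P u) (hg : ∀ u ∈ Ici a, 0 ≤ g u) (hg_pos : ∃ b > a, 0 < g b)
    (hbdd : BddAbove (f '' Ici a)) : f a < 0 := by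
  have nonpos : ∀ u ∈ Ici a, f u ≤ 0 := fun u hu =>
    have hsub : Ici u ⊆ Ici a := Ici_subset_Ici.2 hu
    nonpos_of_le_deriv_of_bddAbove (fun v hv => hf v (hsub hv))
      (fun v hv hfv => by nlinarith [one_le_P v (hsub hv), hg v (hsub hv)])
      (hbdd.mono (image_mono hsub))
  refine (nonpos a self_mem_Ici).lt_of_ne fun hfa => ?_
  obtain ⟨b, hab, hgb⟩ := hg_pos
  obtain ⟨C, hC⟩ := isCompact_Icc.bddAbove_image (hP.mono (fun u (hu : u ∈ Icc a b) => hu.1))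
  have hfb : f b = 0 := by
    refine (nonpos b hab.le).antisymm (nonneg_of_const_mul_le_deriv (C := C)
      (fun u hu => hf u hu.1) (fun u hu => ?_) hfa.ge b (right_mem_Icc.2 hab.le))
    have := mul_le_mul_of_nonpos_right (hC (mem_image_of_mem P hu)) (nonpos u hu.1)
    linarith [hg u hu.1]
  have hmax : IsLocalMax f b := by
    filter_upwards [Ici_mem_nhds hab] with u hu
    exact hfb ▸ nonpos u hu
  have := hmax.hasDerivAt_eq_zero (hf b hab.le)
  rw [hfb, mul_zero, zero_add] at this
  exact hgb.ne' this

end Comparison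

section Hyperbolic

theorem cosh_le_exp_abs (t : ℝ) : cosh t ≤ exp |t| := by
  rw [← cosh_abs, cosh_eq]
  have : exp (-|t|) ≤ exp |t| := exp_le_exp.2 (neg_le_self (abs_nonneg t))
  linarith

theorem sq_div_four_le_cosh (t : ℝ) : t ^ 2 / 4 ≤ cosh t := by
  have hquad := quadratic_le_exp_of_nonneg (abs_nonneg t)
  have hexp := exp_abs_le t
  rw [sq_abs] at hquad
  rw [cosh_eq]
  linarith [abs_nonneg t]

theorem cosh_mul_cosh_mul (a t : ℝ) :
    cosh t * cosh (a * t) = (cosh ((a + 1) * t) + cosh ((a - 1) * t)) / 2 := by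
  rw [add_one_mul, sub_one_mul, cosh_add, cosh_sub]
  ring

theorem sinh_mul_sinh_mul (a t : ℝ) :
    sinh t * sinh (a * t) = (cosh ((a + 1) * t) - cosh ((a - 1) * t)) / 2 := by
  rw [add_one_mul, sub_one_mul, cosh_add, cosh_sub]
  ring

end Hyperbolic

section BesselK

variable {x : ℝ}

theorem exp_neg_mul_cosh_mul_cosh_le (a t : ℝ) (hx : 0 < x) :
    exp (-x * cosh t) * cosh (a * t) ≤ exp ((|a| + 1) ^ 2 / x) * exp (-t) := by
  have amgm : (|a| + 1) * |t| ≤ (|a| + 1) ^ 2 / x + x * (t ^ 2 / 4) := by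
    have hsq : 0 ≤ ((|a| + 1) - x * |t| / 2) ^ 2 / x := by positivity
    have : (|a| + 1) ^ 2 / x + x * (|t| ^ 2 / 4) - (|a| + 1) * |t|
        = ((|a| + 1) - x * |t| / 2) ^ 2 / x := by
      field_simp; ring
    rw [sq_abs] at this
    linarith
  calc exp (-x * cosh t) * cosh (a * t)
      ≤ exp (-x * cosh t) * exp |a * t| := by gcongr; exact cosh_le_exp_abs _
    _ = exp (-x * cosh t + |a| * |t|) := by rw [exp_add, abs_mul]
    _ ≤ exp ((|a| + 1) ^ 2 / x + -t) := by
        have := mul_le_mul_of_nonneg_left (sq_div_four_le_cosh t) hx.le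
        refine exp_le_exp.2 ?_
        linarith [le_abs_self t]
    _ = exp ((|a| + 1) ^ 2 / x) * exp (-t) := exp_add _ _

theorem integrableOn_exp_neg_mul_cosh_mul_cosh (a : ℝ) (hx : 0 < x) :
    IntegrableOn (fun t => exp (-x * cosh t) * cosh (a * t)) (Ioi 0) := by
  refine Integrable.mono' ((integrableOn_exp_neg_Ioi 0).const_mul (exp ((|a| + 1) ^ 2 / x)))
    (Continuous.aestronglyMeasurable (by fun_prop)) (Eventually.of_forall fun t => ?_)
  rw [norm_of_nonneg (mul_nonneg (exp_pos _).le (cosh_pos _).le)]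
  exact exp_neg_mul_cosh_mul_cosh_le a t hx

theorem tendsto_exp_neg_mul_cosh_mul_sinh (a : ℝ) (hx : 0 < x) :
    Tendsto (fun t => exp (-x * cosh t) * sinh (a * t)) atTop (𝓝 0) := by
  refine squeeze_zero_norm (fun t => ?_)
    (by simpa using tendsto_exp_neg_atTop_nhds_zero.const_mul (exp ((|a| + 1) ^ 2 / x)))
  refine le_trans ?_ (exp_neg_mul_cosh_mul_cosh_le a t hx)
  rw [norm_mul, norm_of_nonneg (exp_pos _).le, Real.norm_eq_abs, abs_sinh, ← cosh_abs (a * t)]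
  gcongr
  exact (sinh_lt_cosh _).le

theorem besselK_pos (a : ℝ) (hx : 0 < x) : 0 < besselK a x := by
  have hpos : ∀ t, 0 < exp (-x * cosh t) * cosh (a * t) := fun t =>
    mul_pos (exp_pos _) (cosh_pos _)
  rw [besselK, setIntegral_pos_iff_support_of_nonneg_ae
    (Eventually.of_forall fun t => (hpos t).le) (integrableOn_exp_neg_mul_cosh_mul_cosh a hx),
    Function.support_eq_univ fun t => (hpos t).ne']
  simp

theorem besselK_le_besselK {a b : ℝ} (hab : |a| ≤ |b|) (hx : 0 < x) :
    besselK a x ≤ besselK b x := by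
  refine setIntegral_mono (integrableOn_exp_neg_mul_cosh_mul_cosh a hx)
    (integrableOn_exp_neg_mul_cosh_mul_cosh b hx) fun t => ?_
  have : cosh (a * t) ≤ cosh (b * t) := by
    rw [cosh_le_cosh, abs_mul, abs_mul]
    gcongr
  dsimp only
  gcongr

/-- Integration of `d/dt (e^{-x cosh t} sinh (a t))` over the half-line. -/
theorem mul_besselK_add_one_sub_besselK_sub_one (a : ℝ) (hx : 0 < x) :
    x * (besselK (a + 1) x - besselK (a - 1) x) = 2 * a * besselK a x := by
  have int_add := integrableOn_exp_neg_mul_cosh_mul_cosh (a + 1) hx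
  have int_sub := integrableOn_exp_neg_mul_cosh_mul_cosh (a - 1) hx
  have int_mid := (integrableOn_exp_neg_mul_cosh_mul_cosh a hx).const_mul a
  have int_diff : IntegrableOn (fun t => x / 2 * (exp (-x * cosh t) * cosh ((a + 1) * t)
      - exp (-x * cosh t) * cosh ((a - 1) * t))) (Ioi 0) := (int_add.sub int_sub).const_mul (x / 2)
  have hderiv : ∀ t ∈ Ici (0 : ℝ), HasDerivAt (fun t => exp (-x * cosh t) * sinh (a * t))
      (a * (exp (-x * cosh t) * cosh (a * t)) - x / 2 * (exp (-x * cosh t) * cosh ((a + 1) * t)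
        - exp (-x * cosh t) * cosh ((a - 1) * t))) t := fun t _ => by
    refine ((((hasDerivAt_cosh t).const_mul (-x)).exp).mul
      (((hasDerivAt_id t).const_mul a).sinh)).congr_deriv ?_
    simp only [id, mul_one]
    linear_combination (-x * exp (-x * cosh t)) * sinh_mul_sinh_mul a t
  have hint := integral_Ioi_of_hasDerivAt_of_tendsto' hderiv (int_mid.sub int_diff)
    (tendsto_exp_neg_mul_cosh_mul_sinh a hx)
  rw [integral_sub int_mid int_diff, integral_const_mul, integral_const_mul,
    integral_sub int_add int_sub] at hint
  simp only [mul_zero, sinh_zero, sub_zero] at hint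
  simp only [besselK]
  linarith

theorem hasDerivAt_besselK (a : ℝ) (hx : 0 < x) :
    HasDerivAt (besselK a) (-(besselK (a + 1) x + besselK (a - 1) x) / 2) x := by
  have hx2 : 0 < x / 2 := half_pos hx
  have int (b : ℝ) {y : ℝ} (hy : 0 < y) := integrableOn_exp_neg_mul_cosh_mul_cosh b hy
  have key := (hasDerivAt_integral_of_dominated_loc_of_deriv_le
    (μ := volume.restrict (Ioi (0 : ℝ)))
    (F := fun y t => exp (-y * cosh t) * cosh (a * t))
    (F' := fun y t => -(exp (-y * cosh t) * (cosh t * cosh (a * t))))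
    (bound := fun t => exp (-(x / 2) * cosh t) * (cosh t * cosh (a * t)))
    (Ioi_mem_nhds (half_lt_self hx))
    (Eventually.of_forall fun y => Continuous.aestronglyMeasurable (by fun_prop))
    (int a hx) (Continuous.aestronglyMeasurable (by fun_prop)) ?_ ?_ ?_).2
  · refine key.congr_deriv ?_
    simp only [besselK]
    rw [← integral_add (int _ hx) (int _ hx), ← integral_neg, ← integral_div]
    congr 1 with t
    rw [cosh_mul_cosh_mul]
    ring
  · refine Eventually.of_forall fun t y hy => ?_
    have hcosh := cosh_pos t
    have hprod : 0 ≤ cosh t * cosh (a * t) := mul_nonneg hcosh.le (cosh_pos _).le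
    rw [norm_neg, norm_of_nonneg (mul_nonneg (exp_pos _).le hprod)]
    have hy : x / 2 ≤ y := le_of_lt hy
    gcongr
  · refine (((int (a + 1) hx2).add (int (a - 1) hx2)).div_const 2).congr
      (Eventually.of_forall fun t => ?_)
    simp only [Pi.add_apply, cosh_mul_cosh_mul]
    ring
  · refine Eventually.of_forall fun t y _ => ?_
    refine (((hasDerivAt_id y).neg.mul_const (cosh t)).exp.mul_const (cosh (a * t))).congr_deriv ?_
    simp only [Pi.neg_apply, id]
    ring

theorem hasDerivAt_besselK_raising (a : ℝ) (hx : 0 < x) :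
    HasDerivAt (besselK a) (a / x * besselK a x - besselK (a + 1) x) x := by
  refine (hasDerivAt_besselK a hx).congr_deriv ?_
  field_simp
  linear_combination mul_besselK_add_one_sub_besselK_sub_one a hx

theorem hasDerivAt_besselK_lowering (a : ℝ) (hx : 0 < x) :
    HasDerivAt (besselK a) (-besselK (a - 1) x - a / x * besselK a x) x := by
  refine (hasDerivAt_besselK a hx).congr_deriv ?_
  field_simp
  linear_combination -mul_besselK_add_one_sub_besselK_sub_one a hx

end BesselK

section Ratio

variable {ν x : ℝ}

/-- The scaled ratio `x K_{ν+1}(x) / K_ν(x)`, whose Riccati equation has simpler coefficients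
than that of the plain ratio. -/
noncomputable def besselKRatio (ν x : ℝ) : ℝ :=
  x * (besselK (ν + 1) x / besselK ν x)

theorem hasDerivAt_besselKRatio (ν : ℝ) (hx : 0 < x) :
    HasDerivAt (besselKRatio ν)
      ((besselKRatio ν x ^ 2 - 2 * ν * besselKRatio ν x - x ^ 2) / x) x := by
  have hK := (besselK_pos ν hx).ne'
  have hK_succ := hasDerivAt_besselK_lowering (ν + 1) hx
  rw [add_sub_cancel_right] at hK_succ
  refine ((hasDerivAt_id x).mul
    (hK_succ.div (hasDerivAt_besselK_raising ν hx) hK)).congr_deriv ?_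
  simp only [besselKRatio, Pi.div_apply, id]
  field_simp
  ring

theorem le_besselKRatio (hν : -1 / 2 ≤ ν) (hx : 0 < x) : x ≤ besselKRatio ν x := by
  have habs : |ν| ≤ |ν + 1| := sq_le_sq.1 (by nlinarith)
  exact le_mul_of_one_le_right hx.le
    ((one_le_div (besselK_pos ν hx)).2 (besselK_le_besselK habs hx))

theorem two_mul_lt_besselKRatio (ν : ℝ) (hx : 0 < x) : 2 * ν < besselKRatio ν x := by
  rw [besselKRatio, ← mul_div_assoc, lt_div_iff₀ (besselK_pos ν hx),
    ← mul_besselK_add_one_sub_besselK_sub_one ν hx]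
  have := besselK_pos (ν - 1) hx
  gcongr
  linarith

theorem lt_besselKRatio_of_riccati_defect_nonneg {b g : ℝ → ℝ} {C : ℝ} (hν : -1 / 2 ≤ ν)
    (hx : 0 < x)
    (hb : ∀ z ∈ Ici x, HasDerivAt b ((b z ^ 2 - 2 * ν * b z - z ^ 2) / z + g z) z)
    (hg : ∀ z ∈ Ici x, 0 ≤ g z) (hg_pos : ∃ z > x, 0 < g z)
    (two_mul_le : ∀ z ∈ Ici x, 2 * ν ≤ b z) (le_add : ∀ z ∈ Ici x, b z ≤ z + C) :
    b x < besselKRatio ν x := by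
  have pos : ∀ z ∈ Ici x, 0 < z := fun z hz => hx.trans_le hz
  have hratio : ∀ z ∈ Ici x, z ≤ besselKRatio ν z := fun z hz => le_besselKRatio hν (pos z hz)
  refine sub_neg.1 (neg_of_hasDerivAt_linear_of_bddAbove
    (f := fun z => b z - besselKRatio ν z) (P := fun z => (b z + besselKRatio ν z - 2 * ν) / z)
    (fun z hz => ?_) (fun z hz => ?_) (fun z hz => ?_) hg hg_pos ⟨C, ?_⟩)
  · refine ((hb z hz).sub (hasDerivAt_besselKRatio ν (pos z hz))).congr_deriv ?_
    ring
  · exact ((((hb z hz).continuousAt.add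
      (hasDerivAt_besselKRatio ν (pos z hz)).continuousAt).sub continuousAt_const).div
        continuousAt_id (pos z hz).ne').continuousWithinAt
  · rw [one_le_div (pos z hz)]
    linarith [hratio z hz, two_mul_le z hz]
  · rintro _ ⟨z, hz, rfl⟩
    dsimp only
    linarith [hratio z hz, le_add z hz]

end Ratio

section Bound

variable {μ k z : ℝ}

/-- The square root in the lower bound, in the parameters `μ = ν - λ` and `k = √(2λ) - 1`. -/
noncomputable def boundRadical (μ k z : ℝ) : ℝ :=
  √(μ ^ 2 + μ / (μ + k ^ 2) * z ^ 2)

theorem sq_boundRadical (hμ : 0 < μ) (k z : ℝ) :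
    boundRadical μ k z ^ 2 = μ ^ 2 + μ / (μ + k ^ 2) * z ^ 2 :=
  sq_sqrt (by positivity)

theorem boundRadical_pos (hμ : 0 < μ) (k z : ℝ) : 0 < boundRadical μ k z :=
  sqrt_pos.2 (by positivity)

theorem lt_boundRadical (hμ : 0 < μ) (k : ℝ) (hz : 0 < z) : μ < boundRadical μ k z :=
  lt_sqrt_of_sq_lt (lt_add_of_pos_right _ (by positivity))

theorem boundRadical_le_add (hμ : 0 < μ) (k : ℝ) (hz : 0 ≤ z) : boundRadical μ k z ≤ μ + z := by
  have hc : μ / (μ + k ^ 2) ≤ 1 := (div_le_one (by positivity)).2 (by nlinarith)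
  refine sqrt_le_iff.2 ⟨by positivity, ?_⟩
  nlinarith [mul_le_mul_of_nonneg_right hc (sq_nonneg z), mul_nonneg hμ.le hz]

theorem boundRadical_injOn (hμ : 0 < μ) (k : ℝ) : InjOn (boundRadical μ k) (Ici 0) := by
  intro z hz w hw hzw
  have hc : μ / (μ + k ^ 2) ≠ 0 := by positivity
  have hsq := congrArg (· ^ 2) hzw
  simp only [sq_boundRadical hμ, add_right_inj, mul_right_inj' hc] at hsq
  exact (sq_eq_sq₀ hz hw).1 hsq

theorem hasDerivAt_boundRadical (hμ : 0 < μ) (k z : ℝ) :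
    HasDerivAt (boundRadical μ k) (μ / (μ + k ^ 2) * z / boundRadical μ k z) z := by
  have hinner := ((hasDerivAt_pow 2 z).const_mul (μ / (μ + k ^ 2))).const_add (μ ^ 2)
  refine (hinner.sqrt (by positivity)).congr_deriv ?_
  have := (boundRadical_pos hμ k z).ne'
  rw [← boundRadical]
  field_simp
  ring

/-- The amount by which `ν + λ + boundRadical μ k` misses the Riccati equation of `besselKRatio ν`,
where `ν = μ + λ` and `λ = (1 + k)² / 2`. -/
noncomputable def riccatiDefect (μ k z : ℝ) : ℝ :=
  (boundRadical μ k z - μ) * (k * boundRadical μ k z - μ) ^ 2 / (μ * boundRadical μ k z) / z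

theorem riccatiDefect_nonneg (hμ : 0 < μ) (k : ℝ) (hz : 0 < z) : 0 ≤ riccatiDefect μ k z := by
  have := boundRadical_pos hμ k z
  have := sub_pos.2 (lt_boundRadical hμ k hz)
  unfold riccatiDefect
  positivity

theorem riccatiDefect_pos (hμ : 0 < μ) (hz : 0 < z) (hk : k * boundRadical μ k z ≠ μ) :
    0 < riccatiDefect μ k z := by
  have := boundRadical_pos hμ k z
  have := sub_pos.2 (lt_boundRadical hμ k hz)
  have := sub_ne_zero.2 hk
  unfold riccatiDefect
  positivity

theorem exists_gt_riccatiDefect_pos (hμ : 0 < μ) (k : ℝ) {x : ℝ} (hx : 0 < x) :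
    ∃ z > x, 0 < riccatiDefect μ k z := by
  by_contra! hdefect
  have touch : ∀ z > x, k * boundRadical μ k z = μ := fun z hz => by
    by_contra hk
    exact (hdefect z hz).not_gt (riccatiDefect_pos hμ (hx.trans hz) hk)
  have htouch₁ := touch (x + 1) (by linarith)
  have htouch₂ := touch (x + 2) (by linarith)
  have hk : k ≠ 0 := left_ne_zero_of_mul (htouch₁ ▸ hμ.ne')
  have := boundRadical_injOn hμ k (show 0 ≤ x + 1 by positivity) (show 0 ≤ x + 2 by positivity)
    (mul_left_cancel₀ hk (htouch₁.trans htouch₂.symm))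
  linarith

theorem hasDerivAt_add_boundRadical {lam ν : ℝ} (hμ : 0 < μ) (hlam : lam = (1 + k) ^ 2 / 2)
    (hν : ν = μ + lam) (hz : z ≠ 0) :
    HasDerivAt (fun z => ν + lam + boundRadical μ k z)
      (((ν + lam + boundRadical μ k z) ^ 2 - 2 * ν * (ν + lam + boundRadical μ k z) - z ^ 2) / z
        + riccatiDefect μ k z) z := by
  refine ((hasDerivAt_boundRadical hμ k z).const_add (ν + lam)).congr_deriv ?_
  have hs := (boundRadical_pos hμ k z).ne'
  have hsq := sq_boundRadical hμ k z
  unfold riccatiDefect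
  set s := boundRadical μ k z
  have hD : μ + k ^ 2 ≠ 0 := by positivity
  have hz_sq : z ^ 2 = (μ + k ^ 2) * (s ^ 2 - μ ^ 2) / μ := by rw [hsq]; field_simp; ring
  have hderiv : μ / (μ + k ^ 2) * z / s = (s ^ 2 - μ ^ 2) / (s * z) := by
    rw [hsq]; field_simp; ring
  rw [hderiv, hz_sq, hν, hlam]
  field_simp
  ring

theorem add_boundRadical_lt_besselKRatio {lam ν x : ℝ} (hμ : 0 < μ)
    (hlam : lam = (1 + k) ^ 2 / 2) (hν : ν = μ + lam) (hx : 0 < x) :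
    ν + lam + boundRadical μ k x < besselKRatio ν x := by
  have lam_nonneg : 0 ≤ lam := hlam ▸ by positivity
  have pos : ∀ z ∈ Ici x, 0 < z := fun z hz => hx.trans_le hz
  refine lt_besselKRatio_of_riccati_defect_nonneg (C := 2 * ν) (by linarith) hx
    (fun z hz => hasDerivAt_add_boundRadical hμ hlam hν (pos z hz).ne')
    (fun z hz => riccatiDefect_nonneg hμ k (pos z hz)) (exists_gt_riccatiDefect_pos hμ k hx)
    (fun z hz => ?_) (fun z hz => ?_)
  · linarith [lt_boundRadical hμ k (pos z hz)]
  · linarith [boundRadical_le_add hμ k (pos z hz).le]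

end Bound

theorem besselK_ratio_close_to_best_lower_general {lam ν x : ℝ} (hlam : 0 ≤ lam) (hν : lam ≤ ν)
    (hpos : 0 < ν + lam + 1 - 2 * √(2 * lam)) (hx : 0 < x) :
    (ν + lam + √((ν - lam) ^ 2 + (ν - lam) / (ν + lam - 2 * √(2 * lam) + 1) * x ^ 2)) / x <
      besselK (ν + 1) x / besselK ν x := by
  rw [div_lt_iff₀' hx, ← besselKRatio]
  rcases hν.eq_or_lt with rfl | hlt
  · simpa [← two_mul] using two_mul_lt_besselKRatio lam hx
  · have hsqrt : √(2 * lam) ^ 2 = 2 * lam := sq_sqrt (by positivity)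
    have hden : ν + lam - 2 * √(2 * lam) + 1 = ν - lam + (√(2 * lam) - 1) ^ 2 := by
      linear_combination -hsqrt
    rw [hden]
    exact add_boundRadical_lt_besselKRatio (sub_pos.2 hlt) (by linear_combination -hsqrt / 2)
      (sub_add_cancel ν lam).symm hx

theorem besselK_ratio_close_to_best_lower (lam ν x : ℝ)
    (hlam : lam ∈ Set.Icc (1 / 2 : ℝ) 2) (hν : lam ≤ ν)
    (hpos : 0 < ν + lam + 1 - 2 * Real.sqrt (2 * lam)) (hx : 0 < x) :
    besselK (ν + 1) x / besselK ν x >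
      (ν + lam +
          Real.sqrt ((ν - lam) ^ 2 +
            ((ν - lam) / (ν + lam - 2 * Real.sqrt (2 * lam) + 1)) * x ^ 2)) / x :=
  besselK_ratio_close_to_best_lower_general (by linarith [hlam.1]) hν hpos hx
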